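/- arXiv:2408.04555 — 5 statements merged into one kernel-verified Lean document; each statement's English description precedes it below -/
import Mathlib

section
/- In the second-price auction with n ≥ 1 buyers, truthful bidding is a dominant strategy: for every buyer i, every true value t ∈ ℝ≥0, every vector of the other buyers' reported bids, and every possible report b ∈ ℝ≥0 by buyer i, the utility of buyer i (with true value t) when she reports t is at least her utility when she reports b. -/
open scoped NNReal

/-- Buyer `i` wins the second-price auction under reported bids `v`:
her pair `(v i, i)` is lexicographically largest (ties broken by index). -/
def SPWins {n : ℕ} (v : Fin n → ℝ≥0) (i : Fin n) : Prop :=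
  ∀ j : Fin n, j ≠ i → v j < v i ∨ (v j = v i ∧ j < i)

/-- Payment of the winner: the highest bid among the other buyers (`0` if `n = 1`). -/
noncomputable def SPPayment {n : ℕ} (v : Fin n → ℝ≥0) (i : Fin n) : ℝ≥0 :=
  (Finset.univ.erase i).sup v

open Classical in
/-- Utility of buyer `i` with true value `t` under reported bid vector `v`:
`t` minus her payment if she wins, and `0` otherwise. -/
noncomputable def SPUtility {n : ℕ} (v : Fin n → ℝ≥0) (i : Fin n) (t : ℝ≥0) : ℝ :=
  if SPWins v i then (t : ℝ) - (SPPayment v i : ℝ) else 0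

/-!
The highest competing bid `p` does not depend on buyer `i`'s own bid. Whatever she reports, her
utility is either `t - p` or `0`, hence at most `max (t - p) 0`; reporting `t` attains this bound,
because she then wins if `p < t` and loses if `t < p`, while at `p = t` both outcomes are worth `0`.
-/

section

variable {n : ℕ}

theorem spPayment_update_self (v : Fin n → ℝ≥0) (i : Fin n) (b : ℝ≥0) :
    SPPayment (Function.update v i b) i = SPPayment v i :=
  Finset.sup_congr rfl fun _ hj => Function.update_of_ne (Finset.ne_of_mem_erase hj) b v

theorem SPWins.spPayment_le {v : Fin n → ℝ≥0} {i : Fin n} (h : SPWins v i) :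
    SPPayment v i ≤ v i :=
  Finset.sup_le fun j hj => (h j (Finset.ne_of_mem_erase hj)).elim le_of_lt fun tie => tie.1.le

theorem spWins_of_spPayment_lt {v : Fin n → ℝ≥0} {i : Fin n} (h : SPPayment v i < v i) :
    SPWins v i := fun j hj =>
  have le_payment : v j ≤ SPPayment v i :=
    Finset.le_sup (Finset.mem_erase_of_ne_of_mem hj (Finset.mem_univ j))
  Or.inl (le_payment.trans_lt h)

theorem spUtility_le_max (v : Fin n → ℝ≥0) (i : Fin n) (t : ℝ≥0) :
    SPUtility v i t ≤ max ((t : ℝ) - SPPayment v i) 0 := by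
  unfold SPUtility
  split_ifs
  · exact le_max_left _ _
  · exact le_max_right _ _

theorem spUtility_truthful_eq_max (v : Fin n → ℝ≥0) (i : Fin n) :
    SPUtility v i (v i) = max ((v i : ℝ) - SPPayment v i) 0 := by
  unfold SPUtility
  split_ifs with wins
  · have payment_le : (SPPayment v i : ℝ) ≤ v i := NNReal.coe_le_coe.2 wins.spPayment_le
    exact (max_eq_left (sub_nonneg.2 payment_le)).symm
  · have le_payment : (v i : ℝ) ≤ SPPayment v i :=
      NNReal.coe_le_coe.2 (not_lt.1 (mt spWins_of_spPayment_lt wins))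
    exact (max_eq_right (sub_nonpos.2 le_payment)).symm

end

/-- In the second-price auction with `n ≥ 1` buyers, truthful bidding is a dominant
strategy: for every buyer `i`, every true value `t`, every vector of the other buyers'
reported bids, and every possible report `b` by buyer `i`, the utility of buyer `i`
(with true value `t`) when she reports `t` is at least her utility when she reports `b`. -/
theorem secondPrice_incentiveCompatible {n : ℕ} (hn : 1 ≤ n) (i : Fin n) (t : ℝ≥0)
    (v : Fin n → ℝ≥0) (b : ℝ≥0) :
    SPUtility (Function.update v i b) i t ≤ SPUtility (Function.update v i t) i t := by
  have truthful : SPUtility (Function.update v i t) i t = max ((t : ℝ) - SPPayment v i) 0 := by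
    simpa only [Function.update_self, spPayment_update_self] using
      spUtility_truthful_eq_max (Function.update v i t) i
  calc SPUtility (Function.update v i b) i t
    _ ≤ max ((t : ℝ) - SPPayment (Function.update v i b) i) 0 := spUtility_le_max _ i t
    _ = max ((t : ℝ) - SPPayment v i) 0 := by rw [spPayment_update_self]
    _ = SPUtility (Function.update v i t) i t := truthful.symm
end

section
/- In the (m+1)-th price auction (MPA), truthful bidding is a dominant strategy: for every buyer i, every true per-item value t ∈ ℝ≥0, every vector of the other buyers' reported bids, and every possible report b ∈ ℝ≥0 by buyer i, the utility of buyer i (with true value t) when she reports t is at least her utility when she reports b. -/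
open scoped NNReal

/-- `MPABeats v j i`: buyer `j`'s pair `(v j, j)` is lexicographically greater than
buyer `i`'s pair `(v i, i)` (ties broken by the index order). -/
def MPABeats {n : ℕ} (v : Fin n → ℝ≥0) (j i : Fin n) : Prop :=
  v i < v j ∨ (v i = v j ∧ i < j)

open Classical in
/-- The winner set `Top_m(v)` of the `(m+1)`-th price auction: the `min(m, n)` buyers whose
pairs `(v i, i)` are highest in the lexicographic order, i.e. those buyers beaten by
fewer than `m` others. -/
noncomputable def TopM {n : ℕ} (m : ℕ) (v : Fin n → ℝ≥0) : Finset (Fin n) :=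
  Finset.univ.filter fun i => (Finset.univ.filter fun j => MPABeats v j i).card < m

/-- Payment of each winner: the highest bid among the non-winners
(`0` if every buyer is a winner). -/
noncomputable def MPAPayment {n : ℕ} (m : ℕ) (v : Fin n → ℝ≥0) : ℝ≥0 :=
  (Finset.univ \ TopM m v).sup v

/-- Utility of buyer `i` with true per-item value `t` under reported bid vector `v`:
`t` minus her payment if she is a winner, and `0` otherwise. -/
noncomputable def MPAUtility {n : ℕ} (m : ℕ) (v : Fin n → ℝ≥0) (i : Fin n) (t : ℝ≥0) : ℝ :=
  if i ∈ TopM m v then (t : ℝ) - (MPAPayment m v : ℝ) else 0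

/-! Two facts about winner sets suffice: their size `min n m` does not depend on the bids, and
every winner outranks every loser. In particular a winner pays at most her bid, so a truthful winner
has nonnegative utility. If changing her bid turns buyer `i` from a loser into a winner, then, the
sizes being equal, she displaces some buyer `j` who used to win; `j` outranked `i` before and is now
a loser, so the price is at least `i`'s original bid. If `i` wins with both bids, any other change
would need two buyers `j, k ≠ i` to swap places, although their relative order is untouched; so the
winners, and with them the price, stay the same. -/

section CountAbove

variable {ι α : Type*} [Fintype ι]

section Preorder

variable [Preorder α] [DecidableLT α] {f : ι → α} {i j : ι}

/-- The number of indices whose value under `f` is strictly larger than that of `i`: the rank of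
`i`, counted from `0`, when indices are sorted by decreasing value. -/
def countAbove (f : ι → α) (i : ι) : ℕ :=
  (Finset.univ.filter fun j => f i < f j).card

theorem countAbove_lt_countAbove (h : f i < f j) : countAbove f j < countAbove f i := by
  have hsub : (Finset.univ.filter fun k => f j < f k) ⊆ Finset.univ.filter fun k => f i < f k :=
    Finset.monotone_filter_right _ fun _ _ hk => h.trans hk
  refine Finset.card_lt_card ((Finset.ssubset_iff_of_subset hsub).2 ⟨j, ?_, ?_⟩)
  · rwa [Finset.mem_filter_univ]
  · rw [Finset.mem_filter_univ]
    exact lt_irrefl _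

theorem countAbove_le_countAbove (h : f i ≤ f j) : countAbove f j ≤ countAbove f i :=
  Finset.card_le_card (Finset.monotone_filter_right _ fun _ _ hk => h.trans_lt hk)

theorem countAbove_lt_card (f : ι → α) (i : ι) : countAbove f i < Fintype.card ι :=
  Finset.card_lt_univ_of_notMem (x := i) (by simp)

end Preorder

section LinearOrder

variable [LinearOrder α] {f : ι → α}

theorem countAbove_injective (hf : Function.Injective f) : Function.Injective (countAbove f) := by
  intro i j hij
  by_contra hne
  rcases lt_or_gt_of_ne (hf.ne hne) with h | h
  · exact (countAbove_lt_countAbove h).ne' hij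
  · exact (countAbove_lt_countAbove h).ne hij

theorem image_countAbove (hf : Function.Injective f) :
    Finset.univ.image (countAbove f) = Finset.range (Fintype.card ι) := by
  refine Finset.eq_of_subset_of_card_le ?_ ?_
  · simpa [Finset.image_subset_iff] using countAbove_lt_card f
  · rw [Finset.card_range, Finset.card_image_of_injective _ (countAbove_injective hf),
      Finset.card_univ]

theorem card_filter_countAbove_lt (hf : Function.Injective f) (m : ℕ) :
    (Finset.univ.filter fun i => countAbove f i < m).card = min (Fintype.card ι) m :=
  calc (Finset.univ.filter fun i => countAbove f i < m).card
      = ((Finset.univ.image (countAbove f)).filter (· < m)).card := by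
        rw [Finset.filter_image, Finset.card_image_of_injective _ (countAbove_injective hf)]
    _ = (Finset.range (min (Fintype.card ι) m)).card := by
        rw [image_countAbove hf]
        congr 1
        ext k
        simp only [Finset.mem_filter, Finset.mem_range, lt_min_iff]
    _ = min (Fintype.card ι) m := Finset.card_range _

end LinearOrder

end CountAbove

section Auction

variable {n m : ℕ} {v w : Fin n → ℝ≥0} {i j : Fin n}

/-- The pair `(v i, i)` in the lexicographic order, by which buyers are ranked. -/
def bidKey (v : Fin n → ℝ≥0) (i : Fin n) : ℝ≥0 ×ₗ Fin n :=
  toLex (v i, i)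

theorem bidKey_injective (v : Fin n → ℝ≥0) : Function.Injective (bidKey v) :=
  fun _ _ h => congrArg (fun p => (ofLex p).2) h

theorem le_of_bidKey_lt (h : bidKey v i < bidKey v j) : v i ≤ v j :=
  Prod.Lex.monotone_fst _ _ h.le

theorem mpaBeats_iff_bidKey_lt : MPABeats v j i ↔ bidKey v i < bidKey v j := by
  simp only [MPABeats, bidKey, Prod.Lex.toLex_lt_toLex]

theorem mem_topM : i ∈ TopM m v ↔ countAbove (bidKey v) i < m := by
  simp only [TopM, countAbove, mpaBeats_iff_bidKey_lt, Finset.mem_filter_univ]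

theorem topM_eq_filter_countAbove (m : ℕ) (v : Fin n → ℝ≥0) :
    TopM m v = Finset.univ.filter fun i => countAbove (bidKey v) i < m := by
  ext i
  rw [mem_topM, Finset.mem_filter_univ]

theorem card_topM (m : ℕ) (v : Fin n → ℝ≥0) : (TopM m v).card = min n m := by
  rw [topM_eq_filter_countAbove, card_filter_countAbove_lt (bidKey_injective v), Fintype.card_fin]

theorem bidKey_lt_bidKey_of_mem_topM (hi : i ∈ TopM m v) (hj : j ∉ TopM m v) :
    bidKey v j < bidKey v i := by
  rw [mem_topM] at hi hj
  by_contra! h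
  exact hj ((countAbove_le_countAbove h).trans_lt hi)

theorem exists_mem_topM_notMem_topM (hv : i ∈ TopM m v) (hw : i ∉ TopM m w) :
    ∃ j ∈ TopM m w, j ∉ TopM m v := by
  by_contra! hsub
  have hcard : (TopM m v).card ≤ (TopM m w).card := by rw [card_topM, card_topM]
  exact hw (Finset.eq_of_subset_of_card_le hsub hcard ▸ hv)

theorem topM_subset_topM_of_forall_ne_eq (h : ∀ j ≠ i, v j = w j) (hv : i ∈ TopM m v)
    (hw : i ∈ TopM m w) : TopM m v ⊆ TopM m w := by
  intro j hjv
  by_contra hjw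
  obtain ⟨k, hkw, hkv⟩ := exists_mem_topM_notMem_topM hjv hjw
  have key_eq : ∀ l ≠ i, bidKey v l = bidKey w l := fun l hl => by simp only [bidKey, h l hl]
  have hv_lt : bidKey v k < bidKey v j := bidKey_lt_bidKey_of_mem_topM hjv hkv
  have hw_lt : bidKey w j < bidKey w k := bidKey_lt_bidKey_of_mem_topM hkw hjw
  rw [key_eq k (ne_of_mem_of_not_mem hv hkv).symm,
    key_eq j (ne_of_mem_of_not_mem hw hjw).symm] at hv_lt
  exact hv_lt.asymm hw_lt

theorem le_mpaPayment_of_notMem_topM (hj : j ∉ TopM m v) : v j ≤ MPAPayment m v :=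
  Finset.le_sup (Finset.mem_sdiff.2 ⟨Finset.mem_univ j, hj⟩)

theorem mpaPayment_le_of_mem_topM (hi : i ∈ TopM m v) : MPAPayment m v ≤ v i :=
  Finset.sup_le fun _ hj =>
    le_of_bidKey_lt (bidKey_lt_bidKey_of_mem_topM hi (Finset.mem_sdiff.1 hj).2)

theorem mpaPayment_eq_of_forall_ne_eq (h : ∀ j ≠ i, v j = w j) (hv : i ∈ TopM m v)
    (hw : i ∈ TopM m w) : MPAPayment m v = MPAPayment m w := by
  have htop : TopM m v = TopM m w :=
    (topM_subset_topM_of_forall_ne_eq h hv hw).antisymm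
      (topM_subset_topM_of_forall_ne_eq (fun j hj => (h j hj).symm) hw hv)
  refine Finset.sup_congr (by rw [htop]) fun j hj => h j ?_
  exact (ne_of_mem_of_not_mem hw (Finset.mem_sdiff.1 hj).2).symm

theorem le_mpaPayment_of_forall_ne_eq (h : ∀ j ≠ i, v j = w j) (hv : i ∉ TopM m v)
    (hw : i ∈ TopM m w) : v i ≤ MPAPayment m w := by
  obtain ⟨j, hjv, hjw⟩ := exists_mem_topM_notMem_topM hw hv
  calc v i ≤ v j := le_of_bidKey_lt (bidKey_lt_bidKey_of_mem_topM hjv hv)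
    _ = w j := h j (ne_of_mem_of_not_mem hjv hv)
    _ ≤ MPAPayment m w := le_mpaPayment_of_notMem_topM hjw

end Auction

/-- In the `(m+1)`-th price auction with `m ≥ 1` items, truthful bidding is a dominant
strategy: for every buyer `i`, every true per-item value `t`, every vector of the other
buyers' reported bids, and every possible report `b` by buyer `i`, the utility of buyer
`i` (with true value `t`) when she reports `t` is at least her utility when she
reports `b`. -/
theorem MPA_incentiveCompatible {n m : ℕ} (hm : 1 ≤ m) (i : Fin n) (t : ℝ≥0)
    (v : Fin n → ℝ≥0) (b : ℝ≥0) :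
    MPAUtility m (Function.update v i b) i t ≤ MPAUtility m (Function.update v i t) i t := by
  have hagree : ∀ j ≠ i, Function.update v i t j = Function.update v i b j := fun j hj => by
    rw [Function.update_of_ne hj, Function.update_of_ne hj]
  unfold MPAUtility
  split_ifs with hb ht ht
  · rw [mpaPayment_eq_of_forall_ne_eq hagree ht hb]
  · have hprice := le_mpaPayment_of_forall_ne_eq hagree ht hb
    rw [Function.update_self] at hprice
    exact sub_nonpos.2 (NNReal.coe_le_coe.2 hprice)
  · have hprice := mpaPayment_le_of_mem_topM ht
    rw [Function.update_self] at hprice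
    exact sub_nonneg.2 (NNReal.coe_le_coe.2 hprice)
  · exact le_rfl
end

section
/- The LOS greedy mechanism for single-minded buyers satisfies the non-sensitivity property: if b and b' are bid profiles that agree on all buyers except possibly buyer i, buyer i is a winner under b (i.e., i ∈ W(b)), and buyer i is still a winner under b' (i.e., i ∈ W(b')), then the winner sets coincide: W(b') = W(b). Consequently, every buyer receives exactly the same bundle under b and under b'. -/
open scoped NNReal

/-- Average valuation of (single-minded) buyer `i`: her bid for her demanded bundle
divided by the number of items in the bundle. -/
noncomputable def avgVal {n m : ℕ} (d : Fin n → Finset (Fin m)) (b : Fin n → ℝ≥0)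
    (i : Fin n) : ℝ≥0 :=
  b i / ((d i).card : ℝ≥0)

/-- `procBefore d b i j`: buyer `i` is processed no later than buyer `j`, i.e. the pair
`(av i, i)` is lexicographically no smaller than `(av j, j)` (buyers are processed in
decreasing lexicographic order of these pairs, ties broken by the index order). -/
noncomputable def procBefore {n m : ℕ} (d : Fin n → Finset (Fin m)) (b : Fin n → ℝ≥0)
    (i j : Fin n) : Prop :=
  toLex (avgVal d b j, j) ≤ toLex (avgVal d b i, i)

open Classical in
/-- The processing order of the LOS mechanism: all buyers, listed in decreasing
lexicographic order of the pairs `(av i, i)`. -/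
noncomputable def procList {n m : ℕ} (d : Fin n → Finset (Fin m)) (b : Fin n → ℝ≥0) :
    List (Fin n) :=
  List.insertionSort (procBefore d b) (List.finRange n)

/-- One step of the LOS greedy allocation: buyer `i` is added to the current winner set
`W` iff her demanded bundle is disjoint from the bundles of all earlier winners. -/
def greedyStep {n m : ℕ} (d : Fin n → Finset (Fin m)) (W : Finset (Fin n)) (i : Fin n) :
    Finset (Fin n) :=
  if Disjoint (d i) (W.biUnion d) then insert i W else W

/-- `LOSWinners d b`: the winner set `W(b)` of the LOS greedy mechanism, obtained by
processing the buyers in decreasing order of average valuation (ties broken by index). -/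
noncomputable def LOSWinners {n m : ℕ} (d : Fin n → Finset (Fin m)) (b : Fin n → ℝ≥0) :
    Finset (Fin n) :=
  (procList d b).foldl (greedyStep d) ∅

/-!
Admitting some of the eventual winners before everybody else does not change the outcome: every
other winner has a bundle disjoint from theirs, and a buyer rejected because of earlier winners is
still rejected. Once admitted, they can be dropped from the processing order. So the winner set is
determined by the processing order of the remaining buyers, which does not depend on the bids of
those dropped.
-/

section Greedy

variable {n m : ℕ} {d : Fin n → Finset (Fin m)} {S W : Finset (Fin n)} {i : Fin n}

lemma greedyStep_of_disjoint (h : Disjoint (d i) (W.biUnion d)) :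
    greedyStep d W i = insert i W :=
  if_pos h

lemma greedyStep_of_not_disjoint (h : ¬Disjoint (d i) (W.biUnion d)) : greedyStep d W i = W :=
  if_neg h

lemma greedyStep_of_mem (hi : i ∈ W) : greedyStep d W i = W := by
  rw [greedyStep, Finset.insert_eq_of_mem hi, ite_self]

lemma subset_greedyStep (d : Fin n → Finset (Fin m)) (W : Finset (Fin n)) (i : Fin n) :
    W ⊆ greedyStep d W i := by
  unfold greedyStep
  split_ifs
  exacts [Finset.subset_insert i W, Finset.Subset.rfl]

lemma subset_foldl_greedyStep (d : Fin n → Finset (Fin m)) (l : List (Fin n))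
    (W : Finset (Fin n)) : W ⊆ l.foldl (greedyStep d) W := by
  induction l generalizing W with
  | nil => exact Finset.Subset.rfl
  | cons a l ih => exact (subset_greedyStep d W a).trans (ih _)

lemma pairwiseDisjoint_greedyStep (hW : (W : Set (Fin n)).PairwiseDisjoint d) (i : Fin n) :
    (greedyStep d W i : Set (Fin n)).PairwiseDisjoint d := by
  by_cases h : Disjoint (d i) (W.biUnion d)
  · rw [greedyStep_of_disjoint h, Finset.coe_insert]
    exact hW.insert fun j hj _ => (Finset.disjoint_biUnion_right _ _ _).1 h j hj
  · rwa [greedyStep_of_not_disjoint h]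

lemma pairwiseDisjoint_foldl_greedyStep (hW : (W : Set (Fin n)).PairwiseDisjoint d)
    (l : List (Fin n)) :
    ((l.foldl (greedyStep d) W : Finset (Fin n)) : Set (Fin n)).PairwiseDisjoint d := by
  induction l generalizing W with
  | nil => exact hW
  | cons a _ ih => exact ih (pairwiseDisjoint_greedyStep hW a)

lemma greedyStep_union
    (hdisj : ((S ∪ greedyStep d W i : Finset (Fin n)) : Set (Fin n)).PairwiseDisjoint d) :
    greedyStep d (S ∪ W) i = S ∪ greedyStep d W i := by
  by_cases h : Disjoint (d i) (W.biUnion d)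
  · rw [greedyStep_of_disjoint h] at hdisj ⊢
    rw [Finset.union_insert] at hdisj ⊢
    by_cases hi : i ∈ S ∪ W
    · rw [greedyStep_of_mem hi, Finset.insert_eq_of_mem hi]
    · rw [Finset.coe_insert, Set.pairwiseDisjoint_insert_of_notMem hi] at hdisj
      exact greedyStep_of_disjoint ((Finset.disjoint_biUnion_right _ _ _).2 hdisj.2)
  · have h' : ¬Disjoint (d i) ((S ∪ W).biUnion d) := fun hSW =>
      h (hSW.mono_right (Finset.biUnion_subset_biUnion_of_subset_left d Finset.subset_union_right))
    rw [greedyStep_of_not_disjoint h, greedyStep_of_not_disjoint h']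

lemma foldl_greedyStep_union {l : List (Fin n)} (hW : (W : Set (Fin n)).PairwiseDisjoint d)
    (hS : S ⊆ l.foldl (greedyStep d) W) :
    l.foldl (greedyStep d) (S ∪ W) = l.foldl (greedyStep d) W := by
  induction l generalizing W with
  | nil => exact Finset.union_eq_right.2 hS
  | cons a l ih =>
    have hsub : S ∪ greedyStep d W a ⊆ (a :: l).foldl (greedyStep d) W :=
      Finset.union_subset hS (subset_foldl_greedyStep d l _)
    have hdisj := (pairwiseDisjoint_foldl_greedyStep hW (a :: l)).subset
      (Finset.coe_subset.2 hsub)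
    rw [List.foldl_cons, greedyStep_union hdisj, ih (pairwiseDisjoint_greedyStep hW a) hS,
      List.foldl_cons]

lemma foldl_greedyStep_filter_notMem {l : List (Fin n)} (hS : S ⊆ W) :
    (l.filter (· ∉ S)).foldl (greedyStep d) W = l.foldl (greedyStep d) W := by
  induction l generalizing W with
  | nil => rfl
  | cons a l ih =>
    by_cases ha : a ∈ S
    · rw [List.filter_cons_of_neg (by simpa using ha), List.foldl_cons,
        greedyStep_of_mem (hS ha), ih hS]
    · rw [List.filter_cons_of_pos (by simpa using ha), List.foldl_cons, List.foldl_cons,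
        ih (hS.trans (subset_greedyStep d W a))]

end Greedy

section Mechanism

variable {n m : ℕ} {d : Fin n → Finset (Fin m)} {b b' : Fin n → ℝ≥0} {S : Finset (Fin n)}
  {i j : Fin n}

lemma procBefore_antisymm (hij : procBefore d b i j) (hji : procBefore d b j i) : i = j :=
  congrArg (fun p => (ofLex p).2) (le_antisymm hji hij)

lemma procBefore_congr (hi : b i = b' i) (hj : b j = b' j) :
    procBefore d b i j ↔ procBefore d b' i j := by
  simp only [procBefore, avgVal, hi, hj]

lemma procList_perm (d : Fin n → Finset (Fin m)) (b : Fin n → ℝ≥0) :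
    (procList d b).Perm (List.finRange n) := by
  classical exact List.perm_insertionSort _ _

lemma pairwise_procList (d : Fin n → Finset (Fin m)) (b : Fin n → ℝ≥0) :
    (procList d b).Pairwise (procBefore d b) := by
  classical
  have : Std.Total (procBefore d b) := ⟨fun _ _ => le_total _ _⟩
  have : IsTrans _ (procBefore d b) := ⟨fun _ _ _ hij hjk => le_trans hjk hij⟩
  exact List.pairwise_insertionSort _ _

lemma filter_procList_congr {p : Fin n → Bool} (h : ∀ j, p j → b j = b' j) :
    (procList d b).filter p = (procList d b').filter p := by
  have hperm := ((procList_perm d b).trans (procList_perm d b').symm).filter p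
  have hsorted := (pairwise_procList d b).filter p
  have hsorted' : ((procList d b').filter p).Pairwise (procBefore d b) :=
    ((pairwise_procList d b').filter p).imp_of_mem fun hi hj =>
      (procBefore_congr (h _ (List.of_mem_filter hi)) (h _ (List.of_mem_filter hj))).2
  exact hperm.eq_of_pairwise (fun _ _ _ _ => procBefore_antisymm) hsorted hsorted'

lemma LOSWinners_eq_foldl_filter_notMem (hS : S ⊆ LOSWinners d b) :
    LOSWinners d b = ((procList d b).filter (· ∉ S)).foldl (greedyStep d) S := by
  have hempty : ((∅ : Finset (Fin n)) : Set (Fin n)).PairwiseDisjoint d := by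
    rw [Finset.coe_empty]
    exact Set.pairwiseDisjoint_empty
  calc LOSWinners d b = (procList d b).foldl (greedyStep d) (S ∪ ∅) :=
        (foldl_greedyStep_union hempty hS).symm
    _ = (procList d b).foldl (greedyStep d) S := by rw [Finset.union_empty]
    _ = ((procList d b).filter (· ∉ S)).foldl (greedyStep d) S :=
        (foldl_greedyStep_filter_notMem Finset.Subset.rfl).symm

theorem LOS_nonSensitive_general (hagree : ∀ j ∉ S, b' j = b j)
    (hS : S ⊆ LOSWinners d b) (hS' : S ⊆ LOSWinners d b') :
    LOSWinners d b' = LOSWinners d b := by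
  have horder : (procList d b').filter (· ∉ S) = (procList d b).filter (· ∉ S) :=
    filter_procList_congr fun j hj => hagree j (of_decide_eq_true hj)
  rw [LOSWinners_eq_foldl_filter_notMem hS', horder, ← LOSWinners_eq_foldl_filter_notMem hS]

end Mechanism

/-- The LOS greedy mechanism for single-minded buyers satisfies the non-sensitivity
property: if `b` and `b'` are bid profiles that agree on all buyers except possibly
buyer `i`, buyer `i` is a winner under `b`, and buyer `i` is still a winner under `b'`,
then the winner sets coincide (hence every buyer receives exactly the same bundle under
`b` and under `b'`). -/
theorem LOS_nonSensitive {n m : ℕ} (d : Fin n → Finset (Fin m))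
    (hd : ∀ i, (d i).Nonempty) (b b' : Fin n → ℝ≥0) (i : Fin n)
    (hagree : ∀ j : Fin n, j ≠ i → b' j = b j)
    (hw : i ∈ LOSWinners d b) (hw' : i ∈ LOSWinners d b') :
    LOSWinners d b' = LOSWinners d b :=
  LOS_nonSensitive_general (S := {i}) (fun j hj => hagree j (Finset.notMem_singleton.1 hj))
    (Finset.singleton_subset_iff.2 hw) (Finset.singleton_subset_iff.2 hw')
end

section
/- The LOS mechanism with the next-in-order payment rule is individually rational for winners: for every bid profile b and every winner i ∈ W(b), the payment of i, which equals av_j · |d_i| where j is the buyer immediately following i in the processing order (and equals 0 if i is the last buyer in the order), is at most her bid b_i. -/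
open scoped NNReal

/-- The LOS payment of buyer `i`: `av j * |d i|` where `j` is the buyer immediately
following `i` in the processing order, and `0` if `i` is the last buyer in the order. -/
noncomputable def LOSPayment {n m : ℕ} (d : Fin n → Finset (Fin m)) (b : Fin n → ℝ≥0)
    (i : Fin n) : ℝ≥0 :=
  match (procList d b).dropWhile (fun x => x != i) with
  | _ :: j :: _ => avgVal d b j * ((d i).card : ℝ≥0)
  | _ => 0

section DropWhile

variable {α : Type*} [BEq α] [LawfulBEq α] {a x y : α} {l t : List α}

theorem eq_of_dropWhile_bne_eq_cons (h : l.dropWhile (· != a) = x :: t) : x = a := by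
  have hx := List.head?_dropWhile_not (· != a) l
  simpa [h] using hx

theorem rel_of_isChain_of_dropWhile_bne_eq {r : α → α → Prop} (hl : l.IsChain r)
    (h : l.dropWhile (· != a) = x :: y :: t) : r a y := by
  have hchain : (x :: y :: t).IsChain r := h ▸ hl.suffix (List.dropWhile_suffix _)
  exact eq_of_dropWhile_bne_eq_cons h ▸ hchain.rel

end DropWhile

section LOS

variable {n m : ℕ} (d : Fin n → Finset (Fin m)) (b : Fin n → ℝ≥0)

instance procBefore.instTotal : Std.Total (procBefore d b) :=
  ⟨fun _ _ => le_total _ _⟩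

instance procBefore.instIsTrans : IsTrans (Fin n) (procBefore d b) :=
  ⟨fun _ _ _ hij hjk => le_trans hjk hij⟩

theorem isChain_procList : (procList d b).IsChain (procBefore d b) := by
  classical exact (List.pairwise_insertionSort _ _).isChain

variable {d b} {i j : Fin n}

theorem procBefore.avgVal_le (h : procBefore d b i j) : avgVal d b j ≤ avgVal d b i :=
  Prod.Lex.monotone_fst _ _ h

theorem avgVal_mul_card (hi : (d i).Nonempty) : avgVal d b i * (d i).card = b i :=
  div_mul_cancel₀ _ (Nat.cast_ne_zero.mpr hi.card_ne_zero)

variable (d b i) in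
theorem LOSPayment_le_avgVal_mul_card : LOSPayment d b i ≤ avgVal d b i * (d i).card := by
  unfold LOSPayment
  split
  case h_1 j _ hdrop =>
    have hij : procBefore d b i j :=
      rel_of_isChain_of_dropWhile_bne_eq (isChain_procList d b) hdrop
    exact mul_le_mul_left hij.avgVal_le _
  case h_2 => exact zero_le

end LOS

theorem LOS_individuallyRational_general {n m : ℕ} (d : Fin n → Finset (Fin m))
    (hd : ∀ i, (d i).Nonempty) (b : Fin n → ℝ≥0) (i : Fin n) :
    LOSPayment d b i ≤ b i :=
  (LOSPayment_le_avgVal_mul_card d b i).trans_eq (avgVal_mul_card (hd i))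

/-- The LOS mechanism with the next-in-order payment rule is individually rational for
winners: for every bid profile `b` and every winner `i ∈ W(b)`, the payment of `i` is at
most her bid `b i`. -/
theorem LOS_individuallyRational {n m : ℕ} (d : Fin n → Finset (Fin m))
    (hd : ∀ i, (d i).Nonempty) (b : Fin n → ℝ≥0) (i : Fin n)
    (hw : i ∈ LOSWinners d b) : LOSPayment d b i ≤ b i :=
  LOS_individuallyRational_general d hd b i
end

section
/- Greedy exploration with welfare-maximizing rounds never loses welfare relative to the initial buyer pool (abstract form of Theorem 2): let R ⊆ B be a set of buyers, let T ≥ 1, and suppose we are given buyer sets R ⊆ S_1 ⊆ S_2 ⊆ ⋯ ⊆ S_T ⊆ B, winner sets W_0 = ∅ and W_t = W_{t−1} ∪ {w_t} for 1 ≤ t ≤ T−1, and item pools I_1 = M and I_{t+1} = I_t \ a^{(t)}(w_t) for 1 ≤ t ≤ T−1, where for each 1 ≤ t ≤ T−1, a^{(t)} is a feasible allocation of items from I_t to buyers in S_t \ W_{t−1} whose social welfare equals OPT(S_t \ W_{t−1}, I_t), and w_t ∈ S_t \ W_{t−1}. Then Σ_{t=1}^{T−1} v_{w_t}(a^{(t)}(w_t))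 + OPT(S_T \ W_{T−1}, I_T) ≥ OPT(R, M). -/
open scoped NNReal

/-- A feasible allocation of items from the pool `I` to the buyers in `S`: every buyer
in `S` receives a bundle of items from `I`, and the bundles of buyers in `S` are
pairwise disjoint. -/
def Feasible {B M : Type*} (S : Finset B) (I : Finset M) (a : B → Finset M) : Prop :=
  (∀ i ∈ S, a i ⊆ I) ∧ (S : Set B).PairwiseDisjoint a

/-- The social welfare of an allocation `a` over the buyer set `S` under valuations `v`. -/
def welfare {B M : Type*} (v : B → Finset M → ℝ≥0) (S : Finset B) (a : B → Finset M) :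
    ℝ≥0 :=
  ∑ i ∈ S, v i (a i)

/-- `OPT v S I`: the maximum social welfare over all feasible allocations of items from
`I` to buyers in `S`. -/
noncomputable def OPT {B M : Type*} (v : B → Finset M → ℝ≥0) (S : Finset B)
    (I : Finset M) : ℝ≥0 :=
  sSup {w : ℝ≥0 | ∃ a : B → Finset M, Feasible S I a ∧ welfare v S a = w}

/-!
Charge the optimum on the residual market round by round. Taking the winner and its bundle out of an
optimal allocation leaves an allocation of the remaining items to the remaining buyers, so the
optimum drops by at most the value the winner collects. Admitting new buyers between rounds can only
raise the optimum, because a newcomer may be assigned the empty bundle, whose value is nonnegative.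
The per-round inequalities telescope.
-/

theorem le_sum_Ico_add_of_le_add_succ {N : Type*} [AddCommMonoid N] [Preorder N] [AddLeftMono N]
    {f g : ℕ → N} {m n : ℕ} (hmn : m ≤ n)
    (h : ∀ t, m ≤ t → t < n → f t ≤ g t + f (t + 1)) :
    f m ≤ ∑ t ∈ Finset.Ico m n, g t + f n := by
  induction n, hmn using Nat.le_induction with
  | base => simp
  | succ n hmn ih =>
    calc f m ≤ ∑ t ∈ Finset.Ico m n, g t + f n := ih fun t hmt htn => h t hmt (by lia)
      _ ≤ ∑ t ∈ Finset.Ico m n, g t + (g n + f (n + 1)) := by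
        gcongr
        exact h n hmn n.lt_succ_self
      _ = ∑ t ∈ Finset.Ico m (n + 1), g t + f (n + 1) := by
        rw [Finset.sum_Ico_succ_top hmn, add_assoc]

section Allocations

variable {B M : Type*} {v : B → Finset M → ℝ≥0} {S S' : Finset B} {I I' : Finset M}
  {a : B → Finset M}

theorem feasible_empty (S : Finset B) (I : Finset M) : Feasible S I fun _ => ∅ :=
  ⟨fun _ _ => Finset.empty_subset I, fun _ _ _ _ _ => Finset.disjoint_empty_left _⟩

theorem Feasible.mono_items (ha : Feasible S I a) (hI : I ⊆ I') : Feasible S I' a :=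
  ⟨fun i hi => (ha.1 i hi).trans hI, ha.2⟩

theorem Feasible.piecewise_empty [DecidablePred (· ∈ S)] (ha : Feasible S I a) (S' : Finset B) :
    Feasible S' I (S.piecewise a fun _ => ∅) := by
  refine ⟨fun i _ => ?_, fun i _ j _ hij => ?_⟩
  · by_cases hi : i ∈ S
    · simpa [hi] using ha.1 i hi
    · simp [hi]
  · by_cases hi : i ∈ S
    · by_cases hj : j ∈ S
      · simpa [Function.onFun, hi, hj] using ha.2 hi hj hij
      · simp [Function.onFun, hj]
    · simp [Function.onFun, hi]

theorem Feasible.erase_sdiff [DecidableEq B] [DecidableEq M] (ha : Feasible S I a) {w : B}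
    (hw : w ∈ S) : Feasible (S.erase w) (I \ a w) a := by
  refine ⟨fun i hi => ?_, ha.2.subset (Finset.coe_subset.2 (S.erase_subset w))⟩
  obtain ⟨hiw, hiS⟩ := Finset.mem_erase.1 hi
  exact Finset.subset_sdiff.2 ⟨ha.1 i hiS, ha.2 hiS hw hiw⟩

theorem welfare_le_welfare_piecewise_empty [DecidablePred (· ∈ S)] (v : B → Finset M → ℝ≥0)
    (hS : S ⊆ S') (a : B → Finset M) :
    welfare v S a ≤ welfare v S' (S.piecewise a fun _ => ∅) :=
  calc welfare v S a = welfare v S (S.piecewise a fun _ => ∅) :=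
        Finset.sum_congr rfl fun i hi => by rw [Finset.piecewise_eq_of_mem _ _ _ hi]
    _ ≤ welfare v S' (S.piecewise a fun _ => ∅) := Finset.sum_le_sum_of_subset hS

theorem bddAbove_welfare (v : B → Finset M → ℝ≥0) (S : Finset B) (I : Finset M) :
    BddAbove {x : ℝ≥0 | ∃ a : B → Finset M, Feasible S I a ∧ welfare v S a = x} := by
  refine ⟨∑ i ∈ S, I.powerset.sup (v i), ?_⟩
  rintro _ ⟨a, ha, rfl⟩
  exact Finset.sum_le_sum fun i hi => Finset.le_sup (Finset.mem_powerset.2 (ha.1 i hi))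

theorem Feasible.welfare_le_OPT (ha : Feasible S I a) : welfare v S a ≤ OPT v S I :=
  le_csSup (bddAbove_welfare v S I) ⟨a, ha, rfl⟩

theorem OPT_le {c : ℝ≥0} (h : ∀ a, Feasible S I a → welfare v S a ≤ c) : OPT v S I ≤ c := by
  refine csSup_le ⟨_, _, feasible_empty S I, rfl⟩ ?_
  rintro _ ⟨a, ha, rfl⟩
  exact h a ha

theorem OPT_mono (v : B → Finset M → ℝ≥0) (hS : S ⊆ S') (hI : I ⊆ I') :
    OPT v S I ≤ OPT v S' I' := by
  classical
  exact OPT_le fun a ha => (welfare_le_welfare_piecewise_empty v hS a).trans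
    ((ha.mono_items hI).piecewise_empty S').welfare_le_OPT

theorem Feasible.welfare_le_add_OPT_erase_sdiff [DecidableEq B] [DecidableEq M]
    (ha : Feasible S I a) {w : B} (hw : w ∈ S) :
    welfare v S a ≤ v w (a w) + OPT v (S.erase w) (I \ a w) :=
  calc welfare v S a = v w (a w) + welfare v (S.erase w) a :=
        (Finset.add_sum_erase S (fun i => v i (a i)) hw).symm
    _ ≤ v w (a w) + OPT v (S.erase w) (I \ a w) := by
        gcongr
        exact (ha.erase_sdiff hw).welfare_le_OPT

end Allocations

theorem greedy_exploration_welfare_general {B M : Type*} [DecidableEq B] [DecidableEq M]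
    (v : B → Finset M → ℝ≥0) (R : Finset B) (T : ℕ) (hT : 1 ≤ T)
    (S W : ℕ → Finset B) (I : ℕ → Finset M) (w : ℕ → B) (a : ℕ → B → Finset M)
    (hRS : R ⊆ S 1)
    (hSmono : ∀ t, 1 ≤ t → t < T → S t ⊆ S (t + 1))
    (hW0 : W 0 = ∅)
    (hWt : ∀ t, 1 ≤ t → t ≤ T - 1 → W t = W (t - 1) ∪ {w t})
    (hIt : ∀ t, 1 ≤ t → t ≤ T - 1 → I (t + 1) = I t \ a t (w t))
    (hfeas : ∀ t, 1 ≤ t → t ≤ T - 1 → Feasible (S t \ W (t - 1)) (I t) (a t))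
    (hopt : ∀ t, 1 ≤ t → t ≤ T - 1 →
      welfare v (S t \ W (t - 1)) (a t) = OPT v (S t \ W (t - 1)) (I t))
    (hwt : ∀ t, 1 ≤ t → t ≤ T - 1 → w t ∈ S t \ W (t - 1)) :
    OPT v R (I 1) ≤
      (∑ t ∈ Finset.Icc 1 (T - 1), v (w t) (a t (w t))) + OPT v (S T \ W (T - 1)) (I T) := by
  have remaining_subset : ∀ t, 1 ≤ t → t < T →
      (S t \ W (t - 1)).erase (w t) ⊆ S (t + 1) \ W t := fun t h1 hlt => by
    rw [hWt t h1 (Nat.le_sub_one_of_lt hlt), Finset.union_singleton, Finset.sdiff_insert]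
    exact Finset.erase_subset_erase _ (Finset.sdiff_subset_sdiff (hSmono t h1 hlt) subset_rfl)
  have OPT_le_of_round : ∀ t, 1 ≤ t → t < T → OPT v (S t \ W (t - 1)) (I t) ≤
      v (w t) (a t (w t)) + OPT v (S (t + 1) \ W t) (I (t + 1)) := fun t h1 hlt => by
    have hle : t ≤ T - 1 := Nat.le_sub_one_of_lt hlt
    calc OPT v (S t \ W (t - 1)) (I t) = welfare v (S t \ W (t - 1)) (a t) := (hopt t h1 hle).symm
      _ ≤ v (w t) (a t (w t)) + OPT v ((S t \ W (t - 1)).erase (w t)) (I t \ a t (w t)) :=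
        (hfeas t h1 hle).welfare_le_add_OPT_erase_sdiff (hwt t h1 hle)
      _ ≤ v (w t) (a t (w t)) + OPT v (S (t + 1) \ W t) (I (t + 1)) := by
        gcongr
        exact OPT_mono v (remaining_subset t h1 hlt) (hIt t h1 hle).superset
  have initial_subset : R ⊆ S 1 \ W (1 - 1) := by simpa [hW0] using hRS
  rw [Finset.Icc_sub_one_right_eq_Ico_of_not_isMin (by simpa using Nat.ne_of_gt hT)]
  exact (OPT_mono v initial_subset subset_rfl).trans <|
    le_sum_Ico_add_of_le_add_succ (f := fun t => OPT v (S t \ W (t - 1)) (I t)) hT OPT_le_of_round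

/-- Greedy exploration with welfare-maximizing rounds never loses welfare relative to
the initial buyer pool (abstract form of Theorem 2): given nested buyer sets
`R ⊆ S 1 ⊆ ⋯ ⊆ S T`, winner sets `W 0 = ∅`, `W t = W (t-1) ∪ {w t}`, item pools
`I 1 = M`, `I (t+1) = I t \ a t (w t)`, where in each round `1 ≤ t ≤ T-1` the allocation
`a t` is a feasible allocation of items from `I t` to buyers in `S t \ W (t-1)` whose
social welfare equals `OPT (S t \ W (t-1)) (I t)` and `w t ∈ S t \ W (t-1)`, we have
`∑ t ∈ [1, T-1], v (w t) (a t (w t)) + OPT (S T \ W (T-1)) (I T) ≥ OPT R M`. -/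
theorem greedy_exploration_welfare {B M : Type*} [Fintype B] [Fintype M]
    [DecidableEq B] [DecidableEq M]
    (v : B → Finset M → ℝ≥0)
    (hmono : ∀ i : B, ∀ x y : Finset M, x ⊆ y → v i x ≤ v i y)
    (hzero : ∀ i : B, v i ∅ = 0)
    (R : Finset B) (T : ℕ) (hT : 1 ≤ T)
    (S W : ℕ → Finset B) (I : ℕ → Finset M) (w : ℕ → B) (a : ℕ → B → Finset M)
    (hRS : R ⊆ S 1)
    (hSmono : ∀ t, 1 ≤ t → t < T → S t ⊆ S (t + 1))
    (hW0 : W 0 = ∅)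
    (hWt : ∀ t, 1 ≤ t → t ≤ T - 1 → W t = W (t - 1) ∪ {w t})
    (hI1 : I 1 = Finset.univ)
    (hIt : ∀ t, 1 ≤ t → t ≤ T - 1 → I (t + 1) = I t \ a t (w t))
    (hfeas : ∀ t, 1 ≤ t → t ≤ T - 1 → Feasible (S t \ W (t - 1)) (I t) (a t))
    (hopt : ∀ t, 1 ≤ t → t ≤ T - 1 →
      welfare v (S t \ W (t - 1)) (a t) = OPT v (S t \ W (t - 1)) (I t))
    (hwt : ∀ t, 1 ≤ t → t ≤ T - 1 → w t ∈ S t \ W (t - 1)) :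
    OPT v R Finset.univ ≤
      (∑ t ∈ Finset.Icc 1 (T - 1), v (w t) (a t (w t))) +
        OPT v (S T \ W (T - 1)) (I T) := by
  simpa only [hI1] using greedy_exploration_welfare_general v R T hT S W I w a hRS hSmono hW0 hWt
    hIt hfeas hopt hwt
end
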